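/- (Finite regularity.) Under conditions 1–5 of the graded Fréchet inverse function theorem, suppose F extends to a continuous map F̄ : X_{k₀} → Y_{k₀−d₁}. Take y ∈ Y_{k₀+d₂} with ‖y‖_{k₀+d₂} < R/m'_{k₀}. Then there is x ∈ X_{k₀} with ‖x‖_{k₀} < R and F̄(x) = y. -/

import Mathlib

open Filter Topology

theorem aux_gron {Y : Type*} [AddCommGroup Y] [Module ℝ Y] (q : Seminorm ℝ Y) (ψ ψ' : ℝ → Y)
    (c A t0 : ℝ) (hc : 0 < c) (hA : 0 ≤ A)
    (hder : ∀ s ∈ Set.Icc 0 t0,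
      Tendsto (fun h : ℝ => q (h⁻¹ • (ψ (s + h) - ψ s) - ψ' s)) (𝓝[≠] 0) (𝓝 0))
    (hbd : ∀ s ∈ Set.Icc 0 t0, q (ψ' s) ≤ c * (A + q (ψ s))) :
    ∀ t ∈ Set.Icc 0 t0, t ≤ 1 → q (ψ t - ψ 0) ≤ t * (c * (A + q (ψ 0)) * Real.exp c) := by
  -- slopes
  have hslope : ∀ s ∈ Set.Icc 0 t0,
      Tendsto (fun h : ℝ => q (h⁻¹ • (ψ (s + h) - ψ s))) (𝓝[≠] 0) (𝓝 (q (ψ' s))) := by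
    intro s hs
    have h1 := hder s hs
    rw [tendsto_iff_norm_sub_tendsto_zero]
    refine squeeze_zero (fun _ => norm_nonneg _) (fun h => ?_) h1
    rw [Real.norm_eq_abs]
    exact abs_sub_map_le_sub q _ _
  have hq0 : ∀ s ∈ Set.Icc 0 t0, Tendsto (fun h : ℝ => q (ψ (s + h) - ψ s)) (𝓝 0) (𝓝 0) := by
    intro s hs
    have h2 : Tendsto (fun h : ℝ => q (ψ (s + h) - ψ s)) (𝓝[≠] 0) (𝓝 0) := by
      have h3 : Tendsto (fun h : ℝ => |h| * q (h⁻¹ • (ψ (s + h) - ψ s))) (𝓝[≠] 0)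
          (𝓝 (|0| * q (ψ' s))) :=
        ((continuous_abs.tendsto 0).mono_left nhdsWithin_le_nhds).mul (hslope s hs)
      rw [abs_zero, zero_mul] at h3
      refine h3.congr' ?_
      filter_upwards [self_mem_nhdsWithin] with h hh
      have hh' : h ≠ 0 := hh
      rw [map_smul_eq_mul, Real.norm_eq_abs, abs_inv, ← mul_assoc,
        mul_inv_cancel₀ (abs_ne_zero.2 hh'), one_mul]
    have h4 : ContinuousAt (fun h : ℝ => q (ψ (s + h) - ψ s)) 0 := by
      rw [continuousAt_iff_punctured_nhds]
      simpa using h2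
    simpa [ContinuousAt] using h4
  have hcont : ContinuousOn (fun s => q (ψ s - ψ 0)) (Set.Icc 0 t0) := by
    intro s hs
    refine ContinuousAt.continuousWithinAt ?_
    have h1 : Tendsto (fun z : ℝ => q (ψ z - ψ s)) (𝓝 s) (𝓝 0) := by
      have h2 : Tendsto (fun z : ℝ => z - s) (𝓝 s) (𝓝 0) := by
        have := (show Continuous (fun z : ℝ => z - s) by fun_prop).tendsto s
        simpa using this
      have := (hq0 s hs).comp h2
      simpa [Function.comp_def] using this
    rw [ContinuousAt, tendsto_iff_norm_sub_tendsto_zero]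
    refine squeeze_zero (fun _ => norm_nonneg _) (fun h => ?_) h1
    rw [Real.norm_eq_abs]
    refine (abs_sub_map_le_sub q _ _).trans (le_of_eq ?_)
    congr 1; abel
  intro t ht ht1
  have key := le_gronwallBound_of_liminf_deriv_right_le (f := fun s => q (ψ s - ψ 0))
    (f' := fun s => q (ψ' s)) (δ := 0) (K := c) (ε := c * (A + q (ψ 0))) hcont
    (by
      intro s hs r hr
      have hs' : s ∈ Set.Icc 0 t0 := ⟨hs.1, hs.2.le⟩
      have h1 : ∀ᶠ h in 𝓝[>] (0:ℝ), q (h⁻¹ • (ψ (s + h) - ψ s)) < r :=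
        ((hslope s hs').mono_left (nhdsWithin_mono _ (fun x hx => ne_of_gt hx))).eventually
          (gt_mem_nhds hr)
      have h2 : Tendsto (fun z : ℝ => z - s) (𝓝[>] s) (𝓝[>] 0) := by
        refine tendsto_nhdsWithin_iff.2 ⟨?_, ?_⟩
        · have := (show Continuous (fun z : ℝ => z - s) by fun_prop).tendsto s
          refine Tendsto.mono_left ?_ nhdsWithin_le_nhds
          simpa using this
        · filter_upwards [self_mem_nhdsWithin] with z hz
          exact sub_pos.2 (Set.mem_Ioi.1 hz)
      refine Eventually.frequently ?_
      filter_upwards [h2.eventually h1, self_mem_nhdsWithin] with z hz hzs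
      have hpos : 0 < z - s := sub_pos.2 hzs
      refine lt_of_le_of_lt ?_ hz
      rw [map_smul_eq_mul, Real.norm_eq_abs, abs_of_pos (inv_pos.2 hpos)]
      refine mul_le_mul_of_nonneg_left ?_ (inv_pos.2 hpos).le
      have := le_abs_self (q (ψ z - ψ 0) - q (ψ s - ψ 0))
      refine this.trans ((abs_sub_map_le_sub q _ _).trans (le_of_eq ?_))
      congr 1
      rw [add_sub_cancel]; abel)
    (by simp)
    (by
      intro s hs
      have h1 := hbd s ⟨hs.1, hs.2.le⟩
      have h2 : q (ψ s) ≤ q (ψ s - ψ 0) + q (ψ 0) := by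
        simpa using map_add_le_add q (ψ s - ψ 0) (ψ 0)
      have h3 := mul_le_mul_of_nonneg_left h2 hc.le
      nlinarith) t ht
  refine key.trans ?_
  rw [gronwallBound_of_K_ne_0 hc.ne']
  simp only [zero_mul, zero_add, sub_zero]
  set B := A + q (ψ 0) with hB
  have hB0 : 0 ≤ B := add_nonneg hA (apply_nonneg q _)
  have e1 : Real.exp (c * t) - 1 ≤ c * t * Real.exp (c * t) := by
    have h1 := Real.add_one_le_exp (-(c * t))
    have h2 := Real.exp_pos (c * t)
    have h3 : Real.exp (-(c * t)) * Real.exp (c * t) = 1 := by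
      rw [← Real.exp_add]; simp
    nlinarith
  have e2 : Real.exp (c * t) ≤ Real.exp c := Real.exp_le_exp.2 (by nlinarith)
  have e3 : c * B / c = B := by field_simp
  rw [e3]
  have e4 : c * t * Real.exp (c * t) ≤ c * t * Real.exp c :=
    mul_le_mul_of_nonneg_left e2 (mul_nonneg hc.le ht.1)
  calc B * (Real.exp (c * t) - 1) ≤ B * (c * t * Real.exp c) :=
        mul_le_mul_of_nonneg_left (e1.trans e4) hB0
    _ = _ := by ring

theorem aux_bb {T : Type*} (r : T → T → Prop) (hrefl : ∀ x, r x x)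
    (htrans : ∀ x z w, r x z → r z w → r x w) (f : T → ENNReal)
    (hmono : ∀ z x, r z x → f z ≤ f x) (x0 : T) (hf : f x0 ≠ ⊤)
    (hchain : ∀ u : ℕ → T, u 0 = x0 → (∀ n, r (u (n+1)) (u n)) → ∃ z, ∀ n, r z (u n)) :
    ∃ x, r x x0 ∧ ∀ z, r z x → f x ≤ f z := by
  have hs : ∀ (n : ℕ) (x : T), ∃ s, r s x ∧
      (f x ≠ ⊤ → ∀ w, r w x → f s ≤ f w + ((n : ENNReal) + 1)⁻¹) := by
    intro n x
    by_cases hx : f x = ⊤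
    · exact ⟨x, hrefl x, fun h => absurd hx h⟩
    have hI : (⨅ w : {w // r w x}, f w) < (⨅ w : {w // r w x}, f w) + ((n : ENNReal) + 1)⁻¹ := by
      refine ENNReal.lt_add_right ?_ ?_
      · exact ne_top_of_le_ne_top hx (iInf_le (fun w : {w // r w x} => f w) ⟨x, hrefl x⟩)
      · exact ENNReal.inv_ne_zero.2 (by finiteness)
    obtain ⟨s, hs⟩ := iInf_lt_iff.1 hI
    refine ⟨s, s.2, fun _ w hw => hs.le.trans ?_⟩
    gcongr
    exact iInf_le (fun w : {w // r w x} => f w) ⟨w, hw⟩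
  choose s hs1 hs2 using hs
  let u : ℕ → T := fun n => Nat.rec x0 (fun n x => s n x) n
  have hu : ∀ n, r (u (n+1)) (u n) := fun n => hs1 n (u n)
  have hu0 : ∀ n, f (u n) ≠ ⊤ := by
    intro n
    induction n with
    | zero => exact hf
    | succ n ih => exact ne_top_of_le_ne_top ih (hmono _ _ (hu n))
  obtain ⟨z, hz⟩ := hchain u rfl hu
  refine ⟨z, hz 0, fun w hw => ?_⟩
  have h1 : ∀ n : ℕ, f z ≤ f w + ((n : ENNReal) + 1)⁻¹ := fun n =>
    (hmono _ _ (hz (n+1))).trans (hs2 n (u n) (hu0 n) w (htrans _ _ _ hw (hz n)))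
  have h2 : Tendsto (fun n : ℕ => f w + ((n : ENNReal) + 1)⁻¹) atTop (𝓝 (f w + 0)) := by
    refine tendsto_const_nhds.add ?_
    have := (tendsto_add_atTop_iff_nat 1).2 ENNReal.tendsto_inv_nat_nhds_zero
    simpa using this
  rw [add_zero] at h2
  exact ge_of_tendsto' h2 h1

theorem aux_step
    {X Y : Type*} [AddCommGroup X] [Module ℝ X] [AddCommGroup Y] [Module ℝ Y]
    (pX : ℕ → Seminorm ℝ X) (pY : ℕ → Seminorm ℝ Y)
    (hYstd : ∀ v : Y, ∃ c₃ : ℝ, ∃ vs : ℕ → Y,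
      (∀ k, Tendsto (fun n => pY k (vs n - v)) atTop (𝓝 0)) ∧
      (∀ n k, pY k (vs n) ≤ c₃ * pY k v) ∧
      (∀ n, ∃ c₀ : ℝ, 0 < c₀ ∧ ∀ k, pY k (vs n) ≤ c₀ ^ k))
    (k₀ d₁ d₂ : ℕ) (R : ℝ)
    (m m' : ℕ → ℝ) (hm : ∀ k, 0 < m k) (hm' : ∀ k, 0 < m' k)
    (F : X → Y) (DF : X → X →ₗ[ℝ] Y) (L : X → Y →ₗ[ℝ] X)
    (hGateaux : ∀ x : X, pX k₀ x < R → ∀ (u : X) (k : ℕ),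
      Tendsto (fun t : ℝ => pY k (t⁻¹ • (F (x + t • u) - F x) - DF x u)) (𝓝[≠] 0) (𝓝 0))
    (htame : ∀ u : X, ∃ c₁ : ℝ, 0 < c₁ ∧ ∀ x : X, pX k₀ x < R → ∀ k,
      pY k (DF x u) ≤ c₁ * (m k * pX (k + d₁) u + pY k (F x)))
    (hright : ∀ x : X, pX k₀ x < R → ∀ v : Y, DF x (L x v) = v)
    (hLbound : ∀ x : X, pX k₀ x < R → ∀ (v : Y) (k : ℕ),
      pX k (L x v) ≤ m' k * pY (k + d₂) v)
    (y : Y) (β : ℕ → ℝ) (hβ : ∀ k, 0 < β k)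
    (hβy : Summable (fun k => β k * pY k y))
    (hβm : ∀ c : ℝ, 0 < c → Summable (fun k => β k * (m k * m' (k + d₁) * c ^ k)))
    (ε : ℝ) (hε0 : 0 < ε) (hε1 : ε < 1)
    (x : X) (hx : pX k₀ x < R) (hS : Summable (fun k => β k * pY k (F x - y)))
    (hSpos : 0 < ∑' k, β k * pY k (F x - y)) :
    ∃ z : X, Summable (fun k => β k * pY k (F z - y)) ∧
      Summable (fun k => ε * β (k + d₂) / m' k * pX k (z - x)) ∧
      (∑' k, β k * pY k (F z - y)) + (∑' k, ε * β (k + d₂) / m' k * pX k (z - x))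
        ≤ ∑' k, β k * pY k (F x - y) ∧
      (∑' k, β k * pY k (F z - y)) < ∑' k, β k * pY k (F x - y) := by
  set v : Y := y - F x with hv
  have hvk : ∀ k, pY k (F x - y) = pY k v := fun k => by rw [hv, map_sub_rev]
  simp only [hvk] at hS hSpos ⊢
  set S : ℝ := ∑' k, β k * pY k v with hSdef
  obtain ⟨c₃, vs, hvs1, hvs2, hvs3⟩ := hYstd v
  set η : ℝ := (1 - ε) / 4 with hη
  have hη0 : 0 < η := by rw [hη]; linarith
  have hηS : 0 < η * S := mul_pos hη0 hSpos
  have hp : ∀ k (a : Y), 0 ≤ β k * pY k a := fun k a => mul_nonneg (hβ k).le (apply_nonneg _ _)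
  -- choose n
  have hbn : ∀ n k, β k * pY k (vs n) ≤ |c₃| * (β k * pY k v) := by
    intro n k
    have h1 : pY k (vs n) ≤ |c₃| * pY k v :=
      (hvs2 n k).trans (mul_le_mul_of_nonneg_right (le_abs_self _) (apply_nonneg _ _))
    calc _ ≤ β k * (|c₃| * pY k v) := mul_le_mul_of_nonneg_left h1 (hβ k).le
      _ = _ := by ring
  have hbn2 : ∀ n k, β k * pY k (vs n - v) ≤ (|c₃| + 1) * (β k * pY k v) := by
    intro n k
    have h1 := mul_le_mul_of_nonneg_left (map_sub_le_add (pY k) (vs n) v) (hβ k).le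
    have := hbn n k
    linarith
  have hlim : Tendsto (fun n => ∑' k, β k * pY k (vs n - v)) atTop (𝓝 (∑' k : ℕ, (0:ℝ))) := by
    refine tendsto_tsum_of_dominated_convergence (hS.mul_left (|c₃| + 1)) ?_ ?_
    · intro k
      simpa using (hvs1 k).const_mul (β k)
    · refine Eventually.of_forall fun n k => ?_
      rw [Real.norm_eq_abs, abs_of_nonneg (hp _ _)]
      exact hbn2 n k
  rw [tsum_zero] at hlim
  obtain ⟨n, hn⟩ := (hlim.eventually (gt_mem_nhds hηS)).exists
  set w := vs n with hw
  have hSw : Summable (fun k => β k * pY k w) :=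
    Summable.of_nonneg_of_le (fun k => hp k _) (hbn n) (hS.mul_left _)
  have hSwv : Summable (fun k => β k * pY k (w - v)) :=
    Summable.of_nonneg_of_le (fun k => hp k _) (hbn2 n) (hS.mul_left _)
  have hTw : ∑' k, β k * pY k w ≤ S + η * S := by
    have h1 : ∑' k, β k * pY k w ≤ ∑' k, (β k * pY k v + β k * pY k (w - v)) := by
      refine Summable.tsum_le_tsum (fun k => ?_) hSw (hS.add hSwv)
      have h2 : pY k w ≤ pY k v + pY k (w - v) := by
        simpa using map_add_le_add (pY k) v (w - v)
      have := mul_le_mul_of_nonneg_left h2 (hβ k).le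
      linarith
    rw [hS.tsum_add hSwv] at h1
    linarith
  obtain ⟨c₀, hc₀, hwc⟩ := hvs3 n
  rw [← hw] at hwc
  set u := L x w with hu
  have hDu : DF x u = w := hright x hx w
  have huk : ∀ k, pX k u ≤ m' k * pY (k + d₂) w := fun k => hLbound x hx w k
  obtain ⟨c₁, hc₁, htm⟩ := htame u
  -- metric sum
  have hSw2 : Summable (fun k => β (k + d₂) * pY (k + d₂) w) := (summable_nat_add_iff d₂).2 hSw
  have hbu : ∀ k, ε * β (k + d₂) / m' k * pX k u ≤ ε * (β (k + d₂) * pY (k + d₂) w) := by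
    intro k
    have h0 : 0 ≤ ε * β (k + d₂) / m' k :=
      div_nonneg (mul_nonneg hε0.le (hβ _).le) (hm' k).le
    refine (mul_le_mul_of_nonneg_left (huk k) h0).trans (le_of_eq ?_)
    have := (hm' k).ne'
    field_simp
  have hpu : ∀ k (a : X), 0 ≤ ε * β (k + d₂) / m' k * pX k a := fun k a =>
    mul_nonneg (div_nonneg (mul_nonneg hε0.le (hβ _).le) (hm' k).le) (apply_nonneg _ _)
  have hSu : Summable (fun k => ε * β (k + d₂) / m' k * pX k u) :=
    Summable.of_nonneg_of_le (fun k => hpu k _) hbu (hSw2.mul_left _)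
  have hTu : ∑' k, ε * β (k + d₂) / m' k * pX k u ≤ ε * (S + η * S) := by
    have h1 := Summable.tsum_le_tsum hbu hSu (hSw2.mul_left _)
    rw [tsum_mul_left] at h1
    refine h1.trans (mul_le_mul_of_nonneg_left ?_ hε0.le)
    refine le_trans ?_ hTw
    rw [← hSw.sum_add_tsum_nat_add d₂]
    have : 0 ≤ ∑ i ∈ Finset.range d₂, β i * pY i w := Finset.sum_nonneg fun i _ => hp i _
    linarith
  -- the time interval
  obtain ⟨t0, ht0, ht01, hball⟩ : ∃ t0 : ℝ, 0 < t0 ∧ t0 ≤ 1 ∧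
      ∀ s ∈ Set.Icc 0 t0, pX k₀ (x + s • u) < R := by
    have hpos : 0 < R - pX k₀ x := by linarith
    have hq : 0 ≤ pX k₀ u := apply_nonneg _ _
    refine ⟨min 1 ((R - pX k₀ x) / (2 * (pX k₀ u + 1))), lt_min one_pos (by positivity),
      min_le_left _ _, fun s hs => ?_⟩
    have h1 : s ≤ (R - pX k₀ x) / (2 * (pX k₀ u + 1)) := hs.2.trans (min_le_right _ _)
    rw [le_div_iff₀ (by positivity)] at h1
    have h2 := map_add_le_add (pX k₀) x (s • u)
    rw [map_smul_eq_mul, Real.norm_eq_abs, abs_of_nonneg hs.1] at h2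
    nlinarith [hs.1]
  -- bound for increments
  have hinc : ∀ k, ∀ t ∈ Set.Icc 0 t0, pY k (F (x + t • u) - F x) ≤
      t * (c₁ * (m k * pX (k + d₁) u + pY k (F x)) * Real.exp c₁) := by
    intro k t ht
    have h := aux_gron (pY k) (fun s => F (x + s • u)) (fun s => DF (x + s • u) u) c₁
      (m k * pX (k + d₁) u) t0 hc₁ (mul_nonneg (hm k).le (apply_nonneg _ _))
      (by
        intro s hs
        have := hGateaux _ (hball s hs) u k
        simpa [add_smul, add_assoc] using this)
      (fun s hs => htm _ (hball s hs) k) t ht (ht.2.trans ht01)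
    simpa using h
  -- summable dominating function
  have hSF : Summable (fun k => β k * pY k (F x)) := by
    refine Summable.of_nonneg_of_le (fun k => hp k _) (fun k => ?_) (hS.add hβy)
    have h2 : pY k (F x) ≤ pY k v + pY k y := by
      have := map_sub_le_add (pY k) y v
      have h3 : y - v = F x := by rw [hv]; abel
      rw [h3] at this
      linarith
    have := mul_le_mul_of_nonneg_left h2 (hβ k).le
    linarith
  have hSm : Summable (fun k => β k * (m k * pX (k + d₁) u)) := by
    refine Summable.of_nonneg_of_le (fun k => mul_nonneg (hβ k).le
      (mul_nonneg (hm k).le (apply_nonneg _ _))) (fun k => ?_)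
      ((hβm c₀ hc₀).mul_left (c₀ ^ (d₁ + d₂)))
    have h1 : pX (k + d₁) u ≤ m' (k + d₁) * c₀ ^ (k + d₁ + d₂) :=
      (huk _).trans (mul_le_mul_of_nonneg_left (hwc _) (hm' _).le)
    have h2 : β k * (m k * pX (k + d₁) u) ≤ β k * (m k * (m' (k + d₁) * c₀ ^ (k + d₁ + d₂))) :=
      mul_le_mul_of_nonneg_left (mul_le_mul_of_nonneg_left h1 (hm k).le) (hβ k).le
    refine h2.trans (le_of_eq ?_)
    ring
  have hdom : Summable (fun k => (c₁ * Real.exp c₁) * (β k * (m k * pX (k + d₁) u) + β k * pY k (F x))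
      + β k * pY k w) := ((hSm.add hSF).mul_left _).add hSw
  have hQb : ∀ t ∈ Set.Ioc 0 t0, ∀ k, β k * pY k (t⁻¹ • (F (x + t • u) - F x) - w) ≤
      (c₁ * Real.exp c₁) * (β k * (m k * pX (k + d₁) u) + β k * pY k (F x)) + β k * pY k w := by
    intro t ht k
    have h1 := hinc k t ⟨ht.1.le, ht.2⟩
    have h2 := map_sub_le_add (pY k) (t⁻¹ • (F (x + t • u) - F x)) w
    rw [map_smul_eq_mul, Real.norm_eq_abs, abs_of_pos (inv_pos.2 ht.1)] at h2
    have h3 := mul_le_mul_of_nonneg_left h1 (inv_pos.2 ht.1).le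
    rw [← mul_assoc, inv_mul_cancel₀ ht.1.ne', one_mul] at h3
    have h4 := mul_le_mul_of_nonneg_left (h2.trans (add_le_add h3 le_rfl)) (hβ k).le
    refine h4.trans (le_of_eq ?_)
    ring
  have hlim2 : Tendsto (fun t : ℝ => ∑' k, β k * pY k (t⁻¹ • (F (x + t • u) - F x) - w))
      (𝓝[>] 0) (𝓝 (∑' k : ℕ, (0:ℝ))) := by
    refine tendsto_tsum_of_dominated_convergence hdom ?_ ?_
    · intro k
      have h1 := (hGateaux x hx u k).mono_left
        (nhdsWithin_mono (0:ℝ) (fun x (hx : x ∈ Set.Ioi (0:ℝ)) => ne_of_gt hx))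
      rw [hDu] at h1
      simpa using h1.const_mul (β k)
    · filter_upwards [Ioc_mem_nhdsGT ht0] with t ht k
      rw [Real.norm_eq_abs, abs_of_nonneg (hp _ _)]
      exact hQb t ht k
  rw [tsum_zero] at hlim2
  obtain ⟨t, htE, ht⟩ :=
    ((hlim2.eventually (gt_mem_nhds hηS)).and (Ioc_mem_nhdsGT ht0)).exists
  have hSQ : Summable (fun k => β k * pY k (t⁻¹ • (F (x + t • u) - F x) - w)) :=
    Summable.of_nonneg_of_le (fun k => hp k _) (hQb t ht) hdom
  have ht1 : t ≤ 1 := ht.2.trans ht01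
  have htpos : 0 < t := ht.1
  have hfz : ∀ k, β k * pY k (F (x + t • u) - y) ≤
      (1 - t) * (β k * pY k v) + t * (β k * pY k (w - v)) +
        t * (β k * pY k (t⁻¹ • (F (x + t • u) - F x) - w)) := by
    intro k
    have h1 : F (x + t • u) - y = -((1 - t) • v) + t • (w - v) +
        t • (t⁻¹ • (F (x + t • u) - F x) - w) := by
      have e : t • (t⁻¹ • (F (x + t • u) - F x) - w) = F (x + t • u) - F x - t • w := by
        rw [smul_sub t, smul_inv_smul₀ htpos.ne']
      rw [e]
      simp only [hv]
      module
    have h2 : pY k (F (x + t • u) - y) ≤ (1 - t) * pY k v + t * pY k (w - v) +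
        t * pY k (t⁻¹ • (F (x + t • u) - F x) - w) := by
      rw [h1]
      refine (map_add_le_add _ _ _).trans ?_
      rw [map_smul_eq_mul (pY k) t (t⁻¹ • _ - w), Real.norm_eq_abs, abs_of_pos htpos]
      refine add_le_add ((map_add_le_add _ _ _).trans ?_) le_rfl
      rw [map_neg_eq_map, map_smul_eq_mul, map_smul_eq_mul, Real.norm_eq_abs, Real.norm_eq_abs,
        abs_of_pos htpos, abs_of_nonneg (by linarith)]
    have h3 := mul_le_mul_of_nonneg_left h2 (hβ k).le
    refine h3.trans (le_of_eq ?_)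
    ring
  have hsumR := ((hS.mul_left (1 - t)).add (hSwv.mul_left t)).add (hSQ.mul_left t)
  have hSz : Summable (fun k => β k * pY k (F (x + t • u) - y)) :=
    Summable.of_nonneg_of_le (fun k => hp k _) hfz hsumR
  have hTz : ∑' k, β k * pY k (F (x + t • u) - y) ≤ (1 - t) * S + t * (2 * (η * S)) := by
    have h1 := Summable.tsum_le_tsum hfz hSz hsumR
    rw [((hS.mul_left (1 - t)).add (hSwv.mul_left t)).tsum_add (hSQ.mul_left t),
      (hS.mul_left (1 - t)).tsum_add (hSwv.mul_left t), tsum_mul_left, tsum_mul_left,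
      tsum_mul_left] at h1
    have h2 := mul_le_mul_of_nonneg_left hn.le htpos.le
    have h3 := mul_le_mul_of_nonneg_left htE.le htpos.le
    rw [← hSdef] at h1
    linarith
  have hd : ∀ k, ε * β (k + d₂) / m' k * pX k (x + t • u - x) =
      t * (ε * β (k + d₂) / m' k * pX k u) := by
    intro k
    rw [add_sub_cancel_left, map_smul_eq_mul, Real.norm_eq_abs, abs_of_pos htpos]
    ring
  have htS : 0 < t * S := mul_pos htpos hSpos
  have hεη : η * ε ≤ η := by nlinarith
  have h4η : 4 * η = 1 - ε := by rw [hη]; ring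
  refine ⟨x + t • u, hSz, ?_, ?_, ?_⟩
  · simp only [hd]
    exact hSu.mul_left t
  · simp only [hd]
    rw [tsum_mul_left]
    have h2 := mul_le_mul_of_nonneg_left hTu htpos.le
    have h3 : 0 ≤ t * S * (1 - 2 * η - ε - η * ε) := mul_nonneg htS.le (by linarith)
    nlinarith
  · have h3 : 0 < t * S * (1 - 2 * η) := mul_pos htS (by linarith)
    nlinarith

theorem aux_summable {a : ℕ → ℝ} (ha : ∀ k, 0 ≤ a k)
    (h : ∑' k, ENNReal.ofReal (a k) ≠ ⊤) : Summable a := by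
  have := ENNReal.summable_toReal h
  simpa [ENNReal.toReal_ofReal, ha] using this

theorem aux_solve
    {X Y : Type*} [AddCommGroup X] [Module ℝ X] [AddCommGroup Y] [Module ℝ Y]
    (pX : ℕ → Seminorm ℝ X) (pY : ℕ → Seminorm ℝ Y)
    (hXcomplete : ∀ u : ℕ → X,
      (∀ k, ∀ ε > (0:ℝ), ∃ N, ∀ i ≥ N, ∀ j ≥ N, pX k (u i - u j) < ε) →
      ∃ x : X, ∀ k, Tendsto (fun n => pX k (u n - x)) atTop (𝓝 0))
    (hYstd : ∀ v : Y, ∃ c₃ : ℝ, ∃ vs : ℕ → Y,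
      (∀ k, Tendsto (fun n => pY k (vs n - v)) atTop (𝓝 0)) ∧
      (∀ n k, pY k (vs n) ≤ c₃ * pY k v) ∧
      (∀ n, ∃ c₀ : ℝ, 0 < c₀ ∧ ∀ k, pY k (vs n) ≤ c₀ ^ k))
    (k₀ d₁ d₂ : ℕ) (R : ℝ)
    (m m' : ℕ → ℝ) (hm : ∀ k, 0 < m k) (hm' : ∀ k, 0 < m' k)
    (F : X → Y) (DF : X → X →ₗ[ℝ] Y) (L : X → Y →ₗ[ℝ] X)
    (hFcont : ∀ x : X, pX k₀ x < R → ∀ xs : ℕ → X, (∀ j, pX k₀ (xs j) < R) →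
      (∀ k, Tendsto (fun j => pX k (xs j - x)) atTop (𝓝 0)) →
      ∀ k, Tendsto (fun j => pY k (F (xs j) - F x)) atTop (𝓝 0))
    (hGateaux : ∀ x : X, pX k₀ x < R → ∀ (u : X) (k : ℕ),
      Tendsto (fun t : ℝ => pY k (t⁻¹ • (F (x + t • u) - F x) - DF x u)) (𝓝[≠] 0) (𝓝 0))
    (htame : ∀ u : X, ∃ c₁ : ℝ, 0 < c₁ ∧ ∀ x : X, pX k₀ x < R → ∀ k,
      pY k (DF x u) ≤ c₁ * (m k * pX (k + d₁) u + pY k (F x)))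
    (hright : ∀ x : X, pX k₀ x < R → ∀ v : Y, DF x (L x v) = v)
    (hLbound : ∀ x : X, pX k₀ x < R → ∀ (v : Y) (k : ℕ),
      pX k (L x v) ≤ m' k * pY (k + d₂) v)
    (x0 : X) (y : Y) (ρ : ℝ) (hρ : m' k₀ * pY (k₀ + d₂) (F x0 - y) < ρ)
    (hρR : pX k₀ x0 + ρ ≤ R) :
    ∃ x : X, pX k₀ (x - x0) < ρ ∧ ∀ k, pY k (F x - y) = 0 := by
  have hM : 0 < m' k₀ := hm' k₀
  set a : ℝ := pY (k₀ + d₂) (F x0 - y) with ha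
  have ha0 : 0 ≤ a := apply_nonneg _ _
  obtain ⟨ε, hε0, hε1, A, haA, hAε⟩ : ∃ ε : ℝ, 0 < ε ∧ ε < 1 ∧ ∃ A : ℝ, a < A ∧ m' k₀ * A < ε * ρ := by
    have h1 : a < ρ / m' k₀ := by rw [lt_div_iff₀ hM]; linarith
    obtain ⟨A, hA1, hA2⟩ := exists_between h1
    rw [lt_div_iff₀ hM] at hA2
    have hρ0 : 0 < ρ := lt_of_le_of_lt (mul_nonneg hM.le ha0) hρ
    have h2 : A * m' k₀ / ρ < 1 := by rw [div_lt_one hρ0]; exact hA2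
    obtain ⟨ε, he1, he2⟩ := exists_between h2
    rw [div_lt_iff₀ hρ0] at he1
    have hA0 : 0 < A := lt_of_le_of_lt ha0 hA1
    refine ⟨ε, ?_, he2, A, hA1, by linarith⟩
    by_contra hcon
    nlinarith [mul_pos hA0 hM]
  -- weights
  set W : ℕ → ℝ := fun k => pY k (F x0 - y) + pY k y + m k * m' (k + d₁) with hW
  have hW0 : ∀ k, 0 ≤ W k := fun k =>
    add_nonneg (add_nonneg (apply_nonneg _ _) (apply_nonneg _ _)) (mul_pos (hm _) (hm' _)).le
  set δ : ℝ := (A - a) / Real.exp 1 with hδ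
  have hδ0 : 0 < δ := div_pos (by linarith) (Real.exp_pos _)
  set γ : ℕ → ℝ := fun k => δ / (k.factorial * (1 + W k)) with hγ
  have hden : ∀ k : ℕ, 0 < (k.factorial : ℝ) * (1 + W k) := fun k =>
    mul_pos (by exact_mod_cast k.factorial_pos) (by linarith [hW0 k])
  have hγ0 : ∀ k, 0 < γ k := fun k => div_pos hδ0 (hden k)
  have hγb : ∀ k (b : ℝ), b ≤ W k → γ k * b ≤ δ * (1 ^ k / (k.factorial : ℝ)) := by
    intro k b hb
    have hf : (0:ℝ) < k.factorial := by exact_mod_cast k.factorial_pos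
    have h1 : γ k * b ≤ γ k * (1 + W k) := mul_le_mul_of_nonneg_left (by linarith) (hγ0 k).le
    refine h1.trans (le_of_eq ?_)
    have h2 : 1 + W k ≠ 0 := by linarith [hW0 k]
    simp only [hγ]
    field_simp
    simp
  set β : ℕ → ℝ := fun k => (if k = k₀ + d₂ then 1 else 0) + γ k with hβdef
  have hβ : ∀ k, 0 < β k := fun k => by
    have := hγ0 k
    simp only [hβdef]
    split_ifs <;> linarith
  have hβsum : ∀ b : ℕ → ℝ, Summable (fun k => γ k * b k) →
      HasSum (fun k => β k * b k) (b (k₀ + d₂) + ∑' k, γ k * b k) := by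
    intro b hb
    have h1 : HasSum (fun k => if k = k₀ + d₂ then b k else 0) (b (k₀ + d₂)) := by
      have := hasSum_ite_eq (k₀ + d₂) (b (k₀ + d₂))
      refine this.congr_fun ?_ |> fun h => h
      intro k
      by_cases hk : k = k₀ + d₂ <;> simp [hk]
    refine (h1.add hb.hasSum).congr_fun ?_
    intro k
    by_cases hk : k = k₀ + d₂ <;> simp [hβdef, hk, add_mul]
  have hexp : ∀ c : ℝ, Summable (fun k : ℕ => δ * (c ^ k / (k.factorial : ℝ))) := fun c =>
    (Real.summable_pow_div_factorial c).mul_left δ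
  have hγs : ∀ b : ℕ → ℝ, (∀ k, 0 ≤ b k) → (∀ k, b k ≤ W k) → Summable (fun k => γ k * b k) :=
    fun b hb0 hb => Summable.of_nonneg_of_le (fun k => mul_nonneg (hγ0 k).le (hb0 k))
      (fun k => hγb k _ (hb k)) (hexp 1)
  have hβy : Summable (fun k => β k * pY k y) := by
    refine (hβsum (fun k => pY k y) (hγs _ (fun k => apply_nonneg _ _) fun k => ?_)).summable
    have h1 : 0 ≤ pY k (F x0 - y) := apply_nonneg _ _
    have h2 := mul_pos (hm k) (hm' (k + d₁))
    simp only [hW]; linarith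
  have hbx0 : ∀ k, pY k (F x0 - y) ≤ W k := by
    intro k
    have h1 : 0 ≤ pY k y := apply_nonneg _ _
    have h2 := mul_pos (hm k) (hm' (k + d₁))
    simp only [hW]; linarith
  have hγx0 := hγs (fun k => pY k (F x0 - y)) (fun k => apply_nonneg _ _) hbx0
  have hβx0 := hβsum (fun k => pY k (F x0 - y)) hγx0
  have hTx0 : ∑' k, β k * pY k (F x0 - y) ≤ A := by
    rw [hβx0.tsum_eq]
    have h1 := Summable.tsum_le_tsum (fun k => hγb k _ (hbx0 k)) hγx0 (hexp 1)
    rw [tsum_mul_left] at h1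
    have h2 : ∑' k : ℕ, (1:ℝ) ^ k / (k.factorial : ℝ) = Real.exp 1 := by
      rw [Real.exp_eq_exp_ℝ, NormedSpace.exp_eq_tsum_div]
    rw [h2, hδ, div_mul_cancel₀ _ (Real.exp_pos _).ne'] at h1
    linarith
  have hβm : ∀ c : ℝ, 0 < c → Summable (fun k => β k * (m k * m' (k + d₁) * c ^ k)) := by
    intro c hc
    refine (hβsum (fun k => m k * m' (k + d₁) * c ^ k) ?_).summable
    refine Summable.of_nonneg_of_le (fun k => ?_) (fun k => ?_) (hexp c)
    · exact mul_nonneg (hγ0 k).le (mul_nonneg (mul_pos (hm k) (hm' _)).le (pow_pos hc k).le)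
    · have h1 : m k * m' (k + d₁) ≤ W k := by
        have h1 : 0 ≤ pY k (F x0 - y) := apply_nonneg _ _
        have h2 : 0 ≤ pY k y := apply_nonneg _ _
        simp only [hW]; linarith
      have h2 := mul_le_mul_of_nonneg_right (hγb k _ h1) (pow_pos hc k).le
      rw [one_pow] at h2
      calc _ = γ k * (m k * m' (k + d₁)) * c ^ k := by ring
        _ ≤ _ := h2
        _ = _ := by ring
  set α : ℕ → ℝ := fun k => ε * β (k + d₂) / m' k with hα
  have hα0 : ∀ k, 0 < α k := fun k => div_pos (mul_pos hε0 (hβ _)) (hm' k)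
  have hαk₀ : ε / m' k₀ ≤ α k₀ := by
    simp only [hα]
    refine div_le_div_of_nonneg_right ?_ hM.le
    have : 1 ≤ β (k₀ + d₂) := by
      have := hγ0 (k₀ + d₂)
      simp only [hβdef, if_true]; linarith
    nlinarith
  have hpf : ∀ x k, 0 ≤ β k * pY k (F x - y) := fun x k => mul_nonneg (hβ k).le (apply_nonneg _ _)
  have hpd : ∀ (x : X) k, 0 ≤ α k * pX k x := fun x k => mul_nonneg (hα0 k).le (apply_nonneg _ _)
  set f : X → ENNReal := fun x => ∑' k, ENNReal.ofReal (β k * pY k (F x - y)) with hf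
  set D : X → X → ENNReal := fun z x => ∑' k, ENNReal.ofReal (α k * pX k (z - x)) with hD
  have hfx0 : f x0 ≤ ENNReal.ofReal A := by
    simp only [hf]
    rw [← ENNReal.ofReal_tsum_of_nonneg (hpf x0) hβx0.summable]
    exact ENNReal.ofReal_le_ofReal hTx0
  have hfx0' : f x0 ≠ ⊤ := ne_top_of_le_ne_top ENNReal.ofReal_ne_top hfx0
  let r : X → X → Prop := fun z x => f z + D z x ≤ f x
  have htri : ∀ x z w, D x w ≤ D x z + D z w := by
    intro x z w
    simp only [hD]
    rw [← ENNReal.tsum_add]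
    refine ENNReal.tsum_le_tsum fun k => ?_
    rw [← ENNReal.ofReal_add (hpd _ _) (hpd _ _), ← mul_add]
    refine ENNReal.ofReal_le_ofReal (mul_le_mul_of_nonneg_left ?_ (hα0 k).le)
    have := map_add_le_add (pX k) (x - z) (z - w)
    simpa using this
  have hrefl : ∀ x, r x x := by
    intro x
    simp [r, hD]
  have htrans : ∀ x z w, r x z → r z w → r x w := by
    intro x z w h1 h2
    calc f x + D x w ≤ f x + (D x z + D z w) := by gcongr; exact htri x z w
      _ = (f x + D x z) + D z w := by rw [add_assoc]
      _ ≤ f z + D z w := add_le_add h1 le_rfl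
      _ ≤ f w := h2
  have hmono : ∀ z x, r z x → f z ≤ f x := fun z x h => le_self_add.trans h
  -- points below x0 stay in the ball
  have hball : ∀ x, r x x0 → pX k₀ (x - x0) < ρ := by
    intro x hx
    have h1 : D x x0 ≤ ENNReal.ofReal A := (le_add_self.trans hx).trans hfx0
    have h2 : ENNReal.ofReal (α k₀ * pX k₀ (x - x0)) ≤ ENNReal.ofReal A :=
      (ENNReal.le_tsum k₀).trans h1
    rw [ENNReal.ofReal_le_ofReal_iff (by linarith)] at h2
    have h3 : ε / m' k₀ * pX k₀ (x - x0) ≤ A :=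
      (mul_le_mul_of_nonneg_right hαk₀ (apply_nonneg _ _)).trans h2
    rw [div_mul_eq_mul_div, div_le_iff₀ hM] at h3
    have h4 : ε * pX k₀ (x - x0) < ε * ρ := by linarith
    exact lt_of_mul_lt_mul_left h4 hε0.le
  have hball' : ∀ x, r x x0 → pX k₀ x < R := by
    intro x hx
    have h1 := hball x hx
    have h2 : pX k₀ x ≤ pX k₀ (x - x0) + pX k₀ x0 := by
      simpa using map_add_le_add (pX k₀) (x - x0) x0
    linarith
  -- chains
  have hchain : ∀ u : ℕ → X, u 0 = x0 → (∀ n, r (u (n+1)) (u n)) → ∃ z, ∀ n, r z (u n) := by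
    intro u hu0 hu
    have hle : ∀ n l, n ≤ l → r (u l) (u n) := by
      intro n l hnl
      induction l, hnl using Nat.le_induction with
      | base => exact hrefl _
      | succ l hl ih => exact htrans _ _ _ (hu l) ih
    have hux0 : ∀ n, r (u n) x0 := fun n => hu0 ▸ hle 0 n (Nat.zero_le n)
    have hfin : ∀ n, f (u n) ≠ ⊤ := fun n => ne_top_of_le_ne_top hfx0' (hmono _ _ (hux0 n))
    have hanti : Antitone (fun n => (f (u n)).toReal) := fun n l hnl =>
      ENNReal.toReal_mono (hfin n) (hmono _ _ (hle n l hnl))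
    have hfc : CauchySeq (fun n => (f (u n)).toReal) :=
      (tendsto_atTop_ciInf hanti ⟨0, by rintro _ ⟨n, rfl⟩; exact ENNReal.toReal_nonneg⟩).cauchySeq
    have hdist : ∀ n l, n ≤ l → ∀ k, α k * pX k (u l - u n) ≤ (f (u n)).toReal - (f (u l)).toReal := by
      intro n l hnl k
      have h1 : f (u l) + ENNReal.ofReal (α k * pX k (u l - u n)) ≤ f (u n) := by
        refine le_trans ?_ (hle n l hnl)
        gcongr
        exact ENNReal.le_tsum k
      have h2 := ENNReal.toReal_mono (hfin n) h1
      rw [ENNReal.toReal_add (hfin l) ENNReal.ofReal_ne_top, ENNReal.toReal_ofReal (hpd _ _)] at h2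
      linarith
    have hdist' : ∀ n l k, α k * pX k (u l - u n) ≤ |(f (u n)).toReal - (f (u l)).toReal| := by
      intro n l k
      rcases le_total n l with h | h
      · exact (hdist n l h k).trans (le_abs_self _)
      · rw [map_sub_rev, abs_sub_comm]
        exact (hdist l n h k).trans (le_abs_self _)
    obtain ⟨z, hz⟩ := hXcomplete u (by
      intro k e he
      obtain ⟨N, hN⟩ := Metric.cauchySeq_iff.1 hfc (α k * e) (mul_pos (hα0 k) he)
      refine ⟨N, fun i hi l hl => ?_⟩
      have h1 := hN l hl i hi
      rw [Real.dist_eq] at h1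
      exact lt_of_mul_lt_mul_left ((hdist' l i k).trans_lt h1) (hα0 k).le)
    have hzd : ∀ n k, Tendsto (fun l => pX k (u l - u n)) atTop (𝓝 (pX k (z - u n))) := by
      intro n k
      rw [tendsto_iff_norm_sub_tendsto_zero]
      refine squeeze_zero (fun _ => norm_nonneg _) (fun l => ?_) (hz k)
      rw [Real.norm_eq_abs]
      refine (abs_sub_map_le_sub (pX k) _ _).trans (le_of_eq ?_)
      congr 1; abel
    have hzball : pX k₀ z < R := by
      have h1 : α k₀ * pX k₀ (z - u 0) ≤ A := by
        refine le_of_tendsto' ((hzd 0 k₀).const_mul (α k₀)) fun l => ?_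
        refine (hdist 0 l (Nat.zero_le l) k₀).trans ?_
        have h2 := ENNReal.toReal_mono ENNReal.ofReal_ne_top hfx0
        rw [ENNReal.toReal_ofReal (by linarith)] at h2
        rw [hu0]
        have : 0 ≤ (f (u l)).toReal := ENNReal.toReal_nonneg
        linarith
      rw [hu0] at h1
      have h3 : ε / m' k₀ * pX k₀ (z - x0) ≤ A :=
        (mul_le_mul_of_nonneg_right hαk₀ (apply_nonneg _ _)).trans h1
      rw [div_mul_eq_mul_div, div_le_iff₀ hM] at h3
      have h4 : ε * pX k₀ (z - x0) < ε * ρ := by linarith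
      have h5 := lt_of_mul_lt_mul_left h4 hε0.le
      have h2 : pX k₀ z ≤ pX k₀ (z - x0) + pX k₀ x0 := by
        simpa using map_add_le_add (pX k₀) (z - x0) x0
      linarith
    have hFz := hFcont z hzball u (fun n => hball' _ (hux0 n)) hz
    have hFz' : ∀ k, Tendsto (fun l => pY k (F (u l) - y)) atTop (𝓝 (pY k (F z - y))) := by
      intro k
      rw [tendsto_iff_norm_sub_tendsto_zero]
      refine squeeze_zero (fun _ => norm_nonneg _) (fun l => ?_) (hFz k)
      rw [Real.norm_eq_abs]
      refine (abs_sub_map_le_sub (pY k) _ _).trans (le_of_eq ?_)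
      congr 1; abel
    refine ⟨z, fun n => ?_⟩
    simp only [r, hf, hD]
    rw [← ENNReal.tsum_add]
    refine ENNReal.tsum_le_of_sum_range_le fun N => ?_
    have hlim : Tendsto (fun l => ∑ k ∈ Finset.range N, (ENNReal.ofReal (β k * pY k (F (u l) - y)) +
        ENNReal.ofReal (α k * pX k (u l - u n)))) atTop
        (𝓝 (∑ k ∈ Finset.range N, (ENNReal.ofReal (β k * pY k (F z - y)) +
        ENNReal.ofReal (α k * pX k (z - u n))))) := by
      refine tendsto_finsetSum _ fun k _ => Tendsto.add ?_ ?_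
      · exact ENNReal.tendsto_ofReal ((hFz' k).const_mul _)
      · exact ENNReal.tendsto_ofReal ((hzd n k).const_mul _)
    refine le_of_tendsto hlim ?_
    filter_upwards [eventually_ge_atTop n] with l hl
    refine (ENNReal.sum_le_tsum _).trans ?_
    rw [ENNReal.tsum_add]
    exact hle n l hl
  obtain ⟨x, hxx0, hmin⟩ := aux_bb r hrefl htrans f hmono x0 hfx0' hchain
  refine ⟨x, hball x hxx0, ?_⟩
  have hfxt : f x ≠ ⊤ := ne_top_of_le_ne_top hfx0' (hmono _ _ hxx0)
  have hSx : Summable (fun k => β k * pY k (F x - y)) := aux_summable (hpf x) hfxt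
  by_contra hcon
  push Not at hcon
  obtain ⟨k, hk⟩ := hcon
  have hpos : 0 < ∑' k, β k * pY k (F x - y) :=
    hSx.tsum_pos (hpf x) k (mul_pos (hβ k) (lt_of_le_of_ne (apply_nonneg _ _) (Ne.symm hk)))
  obtain ⟨z, hz1, hz2, hz3, hz4⟩ := aux_step pX pY hYstd k₀ d₁ d₂ R m m' hm hm' F DF L hGateaux htame
    hright hLbound y β hβ hβy hβm ε hε0 hε1 x (hball' x hxx0) hSx hpos
  have efx : f x = ENNReal.ofReal (∑' k, β k * pY k (F x - y)) :=
    (ENNReal.ofReal_tsum_of_nonneg (hpf x) hSx).symm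
  have efz : f z = ENNReal.ofReal (∑' k, β k * pY k (F z - y)) :=
    (ENNReal.ofReal_tsum_of_nonneg (hpf z) hz1).symm
  have eD : D z x = ENNReal.ofReal (∑' k, α k * pX k (z - x)) :=
    (ENNReal.ofReal_tsum_of_nonneg (hpd (z - x)) hz2).symm
  have hrz : r z x := by
    simp only [r]
    rw [efx, efz, eD, ← ENNReal.ofReal_add (tsum_nonneg (hpf z)) (tsum_nonneg (hpd (z - x)))]
    exact ENNReal.ofReal_le_ofReal hz3
  have h1 := hmin z hrz
  rw [efx, efz, ENNReal.ofReal_le_ofReal_iff (tsum_nonneg (hpf z))] at h1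
  linarith

/-- Corollary cor6: finite regularity. -/
theorem stmt10
    (X Y : Type*) [AddCommGroup X] [Module ℝ X] [AddCommGroup Y] [Module ℝ Y]
    (pX : ℕ → Seminorm ℝ X) (pY : ℕ → Seminorm ℝ Y)
    (hpX : ∀ (k : ℕ) (x : X), pX k x ≤ pX (k+1) x)
    (hpY : ∀ (k : ℕ) (y : Y), pY k y ≤ pY (k+1) y)
    (hXcomplete : ∀ u : ℕ → X,
      (∀ k, ∀ ε > (0:ℝ), ∃ N, ∀ i ≥ N, ∀ j ≥ N, pX k (u i - u j) < ε) →
      ∃ x : X, ∀ k, Tendsto (fun n => pX k (u n - x)) atTop (𝓝 0))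
    (hYstd : ∀ v : Y, ∃ c₃ : ℝ, ∃ vs : ℕ → Y,
      (∀ k, Tendsto (fun n => pY k (vs n - v)) atTop (𝓝 0)) ∧
      (∀ n k, pY k (vs n) ≤ c₃ * pY k v) ∧
      (∀ n, ∃ c₀ : ℝ, 0 < c₀ ∧ ∀ k, pY k (vs n) ≤ c₀ ^ k))
    (k₀ d₁ d₂ : ℕ) (R : ℝ) (hR : 0 < R)
    (m m' : ℕ → ℝ) (hm : ∀ k, 0 < m k) (hm' : ∀ k, 0 < m' k)
    (hmnd : ∀ k, m k ≤ m (k+1)) (hm'nd : ∀ k, m' k ≤ m' (k+1))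
    (F : X → Y) (DF : X → X →ₗ[ℝ] Y) (L : X → Y →ₗ[ℝ] X)
    (hF0 : F 0 = 0)
    (hFcont : ∀ x : X, pX k₀ x < R → ∀ xs : ℕ → X, (∀ j, pX k₀ (xs j) < R) →
      (∀ k, Tendsto (fun j => pX k (xs j - x)) atTop (𝓝 0)) →
      ∀ k, Tendsto (fun j => pY k (F (xs j) - F x)) atTop (𝓝 0))
    (hGateaux : ∀ x : X, pX k₀ x < R → ∀ (u : X) (k : ℕ),
      Tendsto (fun t : ℝ => pY k (t⁻¹ • (F (x + t • u) - F x) - DF x u)) (𝓝[≠] 0) (𝓝 0))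
    (htame : ∀ u : X, ∃ c₁ : ℝ, 0 < c₁ ∧ ∀ x : X, pX k₀ x < R → ∀ k,
      pY k (DF x u) ≤ c₁ * (m k * pX (k + d₁) u + pY k (F x)))
    (hright : ∀ x : X, pX k₀ x < R → ∀ v : Y, DF x (L x v) = v)
    (hLbound : ∀ x : X, pX k₀ x < R → ∀ (v : Y) (k : ℕ),
      pX k (L x v) ≤ m' k * pY (k + d₂) v)
    (XK YK1 YK2 : Type*)
    [NormedAddCommGroup XK] [NormedSpace ℝ XK] [CompleteSpace XK]
    [NormedAddCommGroup YK1] [NormedSpace ℝ YK1] [CompleteSpace YK1]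
    [NormedAddCommGroup YK2] [NormedSpace ℝ YK2] [CompleteSpace YK2]
    (iX : X →ₗ[ℝ] XK) (hiX : ∀ x : X, ‖iX x‖ = pX k₀ x) (hiXdense : DenseRange iX)
    (iY1 : Y →ₗ[ℝ] YK1) (hiY1 : ∀ y : Y, ‖iY1 y‖ = pY (k₀ - d₁) y)
    (iY2 : Y →ₗ[ℝ] YK2) (hiY2 : ∀ y : Y, ‖iY2 y‖ = pY (k₀ + d₂) y)
    (hiY2dense : DenseRange iY2)
    (j : YK2 →L[ℝ] YK1) (hj : ∀ y : Y, j (iY2 y) = iY1 y)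
    (Fbar : XK → YK1) (hFbarc : Continuous Fbar)
    (hFbarext : ∀ x : X, Fbar (iX x) = iY1 (F x))
    (y : YK2) (hy : ‖y‖ < R / m' k₀) :
    ∃ x : XK, ‖x‖ < R ∧ Fbar x = j y := by
  have hM : 0 < m' k₀ := hm' k₀
  have hyM : m' k₀ * ‖y‖ < R := by
    rw [lt_div_iff₀ hM] at hy
    linarith
  obtain ⟨g, hg⟩ : ∃ g : ℝ, g = R - m' k₀ * ‖y‖ := ⟨_, rfl⟩
  have hg0 : 0 < g := by linarith
  obtain ⟨τ, hτ⟩ : ∃ τ : ℝ, τ = g / (16 * m' k₀) := ⟨_, rfl⟩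
  have hτ0 : 0 < τ := by rw [hτ]; positivity
  have hMτ : m' k₀ * τ = g / 16 := by rw [hτ]; field_simp
  have hpw : ∀ n : ℕ, (0:ℝ) < (1/2) ^ n := fun n => by positivity
  have hpw1 : ∀ n : ℕ, ((1:ℝ)/2) ^ n ≤ 1 := fun n => pow_le_one₀ (by norm_num) (by norm_num)
  have hyy : ∀ n : ℕ, ∃ b : Y, ‖y - iY2 b‖ < τ * (1/2) ^ n := by
    intro n
    obtain ⟨b, hb⟩ := hiY2dense.exists_dist_lt y (mul_pos hτ0 (hpw n))
    exact ⟨b, by rwa [← dist_eq_norm]⟩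
  choose yy hyy using hyy
  let P : ℕ → X → Prop := fun n x =>
    pX k₀ x ≤ m' k₀ * ‖y‖ + g / 8 + g / 2 * (1 - (1/2) ^ n) ∧ ∀ k, pY k (F x - yy n) = 0
  have hsolve := aux_solve pX pY hXcomplete hYstd k₀ d₁ d₂ R m m' hm hm' F DF L hFcont hGateaux
    htame hright hLbound
  have hP0 : ∃ x, P 0 x := by
    obtain ⟨x, hx1, hx2⟩ := hsolve 0 (yy 0) (m' k₀ * ‖y‖ + g / 8)
      (by
        rw [hF0, zero_sub, map_neg_eq_map, ← hiY2]
        have h1 := hyy 0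
        have h2 : ‖iY2 (yy 0)‖ ≤ ‖y‖ + ‖y - iY2 (yy 0)‖ := by
          have := norm_sub_le y (y - iY2 (yy 0))
          simpa using this
        rw [pow_zero, mul_one] at h1
        have h3 : m' k₀ * ‖iY2 (yy 0)‖ ≤ m' k₀ * (‖y‖ + τ) :=
          mul_le_mul_of_nonneg_left (by linarith) hM.le
        linarith)
      (by rw [map_zero]; linarith)
    refine ⟨x, ?_, hx2⟩
    rw [sub_zero] at hx1
    simp only [pow_zero, sub_self, mul_zero, add_zero]
    exact hx1.le
  have hPs : ∀ n x, P n x → ∃ x', P (n+1) x' ∧ pX k₀ (x' - x) < g / 4 * (1/2) ^ n := by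
    rintro n x ⟨hx1, hx2⟩
    have hn := hpw n
    have hn1 := hpw1 n
    have hgn := mul_pos hg0 hn
    obtain ⟨x', h1, h2⟩ := hsolve x (yy (n+1)) (g / 4 * (1/2) ^ n)
      (by
        have e1 : pY (k₀ + d₂) (F x - yy (n+1)) ≤ ‖iY2 (yy n - yy (n+1))‖ := by
          have := map_add_le_add (pY (k₀ + d₂)) (F x - yy n) (yy n - yy (n+1))
          rw [hx2, zero_add, sub_add_sub_cancel] at this
          rwa [hiY2]
        have e2 : ‖iY2 (yy n - yy (n+1))‖ ≤ ‖y - iY2 (yy (n+1))‖ + ‖y - iY2 (yy n)‖ := by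
          have := norm_sub_le (y - iY2 (yy (n+1))) (y - iY2 (yy n))
          rw [map_sub]
          simpa using this
        have e3 := hyy n
        have e4 := hyy (n+1)
        rw [pow_succ] at e4
        have e5 : pY (k₀ + d₂) (F x - yy (n+1)) ≤ 2 * (τ * (1/2) ^ n) := by
          have := mul_pos hτ0 hn
          linarith
        have e6 := mul_le_mul_of_nonneg_left e5 hM.le
        have e7 : m' k₀ * (2 * (τ * (1/2) ^ n)) = 2 * (g / 16) * (1/2) ^ n := by
          rw [← hMτ]; ring
        rw [e7] at e6
        linarith)
      (by nlinarith)
    refine ⟨x', ⟨?_, h2⟩, h1⟩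
    have h3 : pX k₀ x' ≤ pX k₀ (x' - x) + pX k₀ x := by
      simpa using map_add_le_add (pX k₀) (x' - x) x
    rw [pow_succ]
    linarith
  obtain ⟨x0, hx0⟩ := hP0
  choose! s hs1 hs2 using hPs
  let u : ℕ → X := fun n => Nat.rec x0 (fun n x => s n x) n
  have hu : ∀ n, P n (u n) := by
    intro n
    induction n with
    | zero => exact hx0
    | succ n ih => exact hs1 n (u n) ih
  have hud : ∀ n, pX k₀ (u (n+1) - u n) < g / 4 * (1/2) ^ n := fun n => hs2 n (u n) (hu n)
  have hc : CauchySeq (fun n => iX (u n)) := by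
    refine cauchySeq_of_le_geometric (1/2) (g/4) (by norm_num) fun n => ?_
    rw [dist_comm, dist_eq_norm, ← map_sub, hiX]
    exact (hud n).le
  obtain ⟨x, hx⟩ := cauchySeq_tendsto_of_complete hc
  refine ⟨x, ?_, ?_⟩
  · have h1 : ‖x‖ ≤ m' k₀ * ‖y‖ + g / 8 + g / 2 := by
      refine le_of_tendsto' hx.norm fun n => ?_
      rw [hiX]
      have := (hu n).1
      have h2 := mul_pos hg0 (hpw n)
      linarith
    linarith
  · have h1 : Tendsto (fun n => Fbar (iX (u n))) atTop (𝓝 (Fbar x)) :=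
      (hFbarc.tendsto x).comp hx
    have h2 : Tendsto (fun n => iY2 (yy n)) atTop (𝓝 y) := by
      rw [tendsto_iff_norm_sub_tendsto_zero]
      refine squeeze_zero (fun _ => norm_nonneg _)
        (fun n => (by rw [norm_sub_rev]; exact (hyy n).le :
          ‖iY2 (yy n) - y‖ ≤ τ * (1/2) ^ n)) ?_
      have := (tendsto_pow_atTop_nhds_zero_of_lt_one (r := (1/2:ℝ)) (by norm_num)
        (by norm_num)).const_mul τ
      simpa using this
    have h3 : Tendsto (fun n => j (iY2 (yy n))) atTop (𝓝 (j y)) := (j.continuous.tendsto y).comp h2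
    have h4 : (fun n => Fbar (iX (u n))) = fun n => j (iY2 (yy n)) := by
      funext n
      rw [hFbarext, hj, ← sub_eq_zero, ← map_sub, ← norm_eq_zero, hiY1]
      exact (hu n).2 _
    rw [h4] at h1
    exact tendsto_nhds_unique h1 h3
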